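/- arXiv:math/0107034 — 3 statements merged into one kernel-verified Lean document; each statement's English description precedes it below -/
import Mathlib

section
/- Let R be a commutative ring, A an associative unital R-algebra, and a, b ∈ A elements satisfying a*a = 0, b*b = 0, a*b*a = 0 and b*a*b = 0. Then for all scalars x, y, s, t ∈ R: (1 + (x*t)•a) * (1 + ((x+y)*s)•b) * (1 + (y*t)•a) = (1 + (y*s)•b) * (1 + ((x+y)*t)•a) * (1 + (x*s)•b). (Generalized Verma identity in the unipotent case, where ln(1+t a) = t a and ln(1+s b) = s b.) -/
/-- **Generalized Verma identity in the unipotent case.**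
If `a b` in an associative unital `R`-algebra satisfy `a² = 0`, `b² = 0`,
`a*b*a = 0`, `b*a*b = 0`, then for all scalars `x y s t : R`,
`(1 + (xt)•a)(1 + ((x+y)s)•b)(1 + (yt)•a) = (1 + (ys)•b)(1 + ((x+y)t)•a)(1 + (xs)•b)`. -/
theorem verma_identity_unipotent
    {R : Type*} {A : Type*} [CommRing R] [Ring A] [Algebra R A]
    (a b : A) (ha : a * a = 0) (hb : b * b = 0)
    (haba : a * b * a = 0) (hbab : b * a * b = 0) :
    ∀ x y s t : R,
      (1 + (x * t) • a) * (1 + ((x + y) * s) • b) * (1 + (y * t) • a) =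
        (1 + (y * s) • b) * (1 + ((x + y) * t) • a) * (1 + (x * s) • b) := by
  intro x y s t
  simp only [mul_add, add_mul, mul_one, one_mul, smul_mul_assoc, mul_smul_comm, ha, hb, haba, hbab,
    smul_zero, add_zero]
  module
end

section
/- Define φ : Matrix (Fin 2) (Fin 2) ℝ → M₃ by sending m to the block matrix whose (1,1) entry is −trace(m), whose remaining first row and first column entries are 0, and whose lower-right 2×2 block is m. Then: (i) φ is an injective ℝ-linear map satisfying φ(⁅m,n⁆) = ⁅φ(m), φ(n)⁆ for all m, n (a Lie algebra embedding of gl(2) into sl(3)); (ii) the image of φ is contained in P, where P is the ℝ-linear span of {H13, H23, E 1 2, E 1 3, E 2 3, E 3 2}; and (iii) P is the internal direct sum of the image of φ and the span T of {E 1 2, E 1 3} (so that P ≅ gl(2) ⋉ t(2), the algebra of two-dimensional motions extended by gl(2)). -/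
open Matrix

/-- `M₃` is the space of real 3×3 matrices. -/
abbrev M₃ := Matrix (Fin 3) (Fin 3) ℝ

/-- `E i j` (with `1 ≤ i, j ≤ 3`) is the matrix unit with `1` in entry `(i,j)`. -/
noncomputable def E (i j : ℕ) : M₃ :=
  Matrix.of fun a b => if a.val + 1 = i ∧ b.val + 1 = j then (1 : ℝ) else 0

/-- The Cartan generator `H13⊥`. -/
noncomputable def H13 : M₃ := (1/3 : ℝ) • E 1 1 - (2/3 : ℝ) • E 2 2 + (1/3 : ℝ) • E 3 3

/-- The Cartan generator `H23⊥`. -/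
noncomputable def H23 : M₃ := (2/3 : ℝ) • E 1 1 - (1/3 : ℝ) • E 2 2 - (1/3 : ℝ) • E 3 3

/-- The parabolic subalgebra `P = span{H13, H23, E₁₂, E₁₃, E₂₃, E₃₂}`. -/
noncomputable def P : Submodule ℝ M₃ :=
  Submodule.span ℝ ({H13, H23, E 1 2, E 1 3, E 2 3, E 3 2} : Set M₃)

/-- The translation part `T = span{E₁₂, E₁₃}`. -/
noncomputable def T : Submodule ℝ M₃ := Submodule.span ℝ ({E 1 2, E 1 3} : Set M₃)

/-- `φ` sends a 2×2 matrix `m` to the 3×3 block matrix with `(1,1)` entry `-trace m`,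
zeros elsewhere in the first row and column, and lower-right 2×2 block `m`. -/
noncomputable def φ (m : Matrix (Fin 2) (Fin 2) ℝ) : M₃ :=
  Matrix.of fun i j =>
    Fin.cases (Fin.cases (-(Matrix.trace m)) (fun _ => 0) j)
      (fun i' => Fin.cases 0 (fun j' => m i' j') j) i

theorem φ_eq (m : Matrix (Fin 2) (Fin 2) ℝ) :
    φ m = !![-(m 0 0 + m 1 1), 0, 0; 0, m 0 0, m 0 1; 0, m 1 0, m 1 1] := by
  rw [← Matrix.trace_fin_two]
  ext i j
  fin_cases i <;> fin_cases j <;> rfl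

theorem φ_add (m n : Matrix (Fin 2) (Fin 2) ℝ) : φ (m + n) = φ m + φ n := by
  ext i j
  fin_cases i <;> fin_cases j <;> simp [φ_eq]
  ring

theorem φ_smul (c : ℝ) (m : Matrix (Fin 2) (Fin 2) ℝ) : φ (c • m) = c • φ m := by
  ext i j
  fin_cases i <;> fin_cases j <;> simp [φ_eq]
  ring

/-- `φ` as a linear map. -/
noncomputable def φLinear : Matrix (Fin 2) (Fin 2) ℝ →ₗ[ℝ] M₃ where
  toFun := φ
  map_add' := φ_add
  map_smul' := φ_smul

theorem φ_injective : Function.Injective φ := by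
  intro m n h
  ext i j
  exact congrFun (congrFun h i.succ) j.succ

theorem φ_lie (m n : Matrix (Fin 2) (Fin 2) ℝ) : φ ⁅m, n⁆ = ⁅φ m, φ n⁆ := by
  ext i j
  fin_cases i <;> fin_cases j <;>
    simp [φ_eq, Ring.lie_def, Matrix.mul_apply, Fin.sum_univ_succ] <;> ring

theorem span_range_φ : Submodule.span ℝ (Set.range φ) = LinearMap.range φLinear := by
  rw [← Submodule.span_eq (LinearMap.range φLinear), LinearMap.coe_range]
  rfl

theorem φ_eq_combination (m : Matrix (Fin 2) (Fin 2) ℝ) :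
    φ m = (m 1 1 - m 0 0) • H13 + (-m 0 0 - 2 * m 1 1) • H23 + m 0 1 • E 2 3 + m 1 0 • E 3 2 := by
  ext i j
  fin_cases i <;> fin_cases j <;> simp [φ_eq, H13, H23, E] <;> ring

theorem H13_eq_φ : H13 = φ !![-2/3, 0; 0, 1/3] := by
  simp [φ_eq_combination]
  norm_num

theorem H23_eq_φ : H23 = φ !![-1/3, 0; 0, -1/3] := by
  simp [φ_eq_combination]
  norm_num

theorem E_two_three_eq_φ : E 2 3 = φ !![0, 1; 0, 0] := by
  simp [φ_eq_combination]

theorem E_three_two_eq_φ : E 3 2 = φ !![0, 0; 1, 0] := by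
  simp [φ_eq_combination]

theorem φ_mem_P (m : Matrix (Fin 2) (Fin 2) ℝ) : φ m ∈ P := by
  have mem {x : M₃} (hx : x ∈ ({H13, H23, E 1 2, E 1 3, E 2 3, E 3 2} : Set M₃)) : x ∈ P :=
    Submodule.subset_span hx
  rw [φ_eq_combination]
  exact add_mem (add_mem (add_mem (P.smul_mem _ (mem (by simp))) (P.smul_mem _ (mem (by simp))))
    (P.smul_mem _ (mem (by simp)))) (P.smul_mem _ (mem (by simp)))

theorem span_range_φ_sup_T : Submodule.span ℝ (Set.range φ) ⊔ T = P := by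
  apply le_antisymm
  · refine sup_le (Submodule.span_le.2 (Set.range_subset_iff.2 φ_mem_P)) (Submodule.span_mono ?_)
    rintro x (rfl | rfl) <;> simp
  · have image (m : Matrix (Fin 2) (Fin 2) ℝ) : φ m ∈ Submodule.span ℝ (Set.range φ) ⊔ T :=
      Submodule.mem_sup_left (Submodule.subset_span ⟨m, rfl⟩)
    refine Submodule.span_le.2 ?_
    rintro x (rfl | rfl | rfl | rfl | rfl | rfl)
    · exact H13_eq_φ ▸ image _
    · exact H23_eq_φ ▸ image _
    · exact Submodule.mem_sup_right (Submodule.subset_span (by simp))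
    · exact Submodule.mem_sup_right (Submodule.subset_span (by simp))
    · exact E_two_three_eq_φ ▸ image _
    · exact E_three_two_eq_φ ▸ image _

theorem span_range_φ_inf_T : Submodule.span ℝ (Set.range φ) ⊓ T = ⊥ := by
  rw [eq_bot_iff, span_range_φ]
  rintro _ ⟨⟨m, rfl⟩, hT⟩
  obtain ⟨a, b, h⟩ := Submodule.mem_span_pair.1 hT
  have hm : m = 0 := by
    ext i j
    have hij := congrFun (congrFun h i.succ) j.succ
    simpa [E, φLinear, φ] using hij.symm
  simp [hm]

/-- `φ` is an injective linear Lie-algebra embedding of `gl(2)` into `sl(3)` with image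
inside the parabolic subalgebra `P`, and `P` is the internal direct sum of the image
of `φ` and `T = span{E₁₂, E₁₃}` (so `P ≅ gl(2) ⋉ t(2)`, the algebra of two-dimensional
motions extended by `gl(2)`). -/
theorem gl2_embeds_and_P_is_motion_algebra :
    Function.Injective φ ∧
    (∀ m n : Matrix (Fin 2) (Fin 2) ℝ, φ (m + n) = φ m + φ n) ∧
    (∀ (c : ℝ) (m : Matrix (Fin 2) (Fin 2) ℝ), φ (c • m) = c • φ m) ∧
    (∀ m n : Matrix (Fin 2) (Fin 2) ℝ, φ ⁅m, n⁆ = ⁅φ m, φ n⁆) ∧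
    (∀ m : Matrix (Fin 2) (Fin 2) ℝ, φ m ∈ P) ∧
    Submodule.span ℝ (Set.range φ) ⊔ T = P ∧
    Submodule.span ℝ (Set.range φ) ⊓ T = ⊥ := by
  exact ⟨φ_injective, φ_add, φ_smul, φ_lie, φ_mem_P, span_range_φ_sup_T, span_range_φ_inf_T⟩
end

section
/- For η ∈ ℝ define r(η) := H23 ⊗ E 1 3 − E 1 3 ⊗ H23 + E 1 2 ⊗ E 2 3 − E 2 3 ⊗ E 1 2 + η•(H13 ⊗ E 3 2 − E 3 2 ⊗ H13) ∈ M₉ (the parabolic classical r-matrix in the fundamental representation). In M₂₇ := Matrix (Fin 3 × Fin 3 × Fin 3) (Fin 3 × Fin 3 × Fin 3) ℝ set r₁₂ := r(η) ⊗ I₃, r₂₃ := I₃ ⊗ r(η), and let r₁₃ be the matrix with entries r₁₃[(i,j,k),(i',j',k')] = (if j = j' then r(η)[(i,k),(i',k')] else 0). Then for every η ∈ ℝ the classical Yang–Baxter equation holds: ⁅r₁₂, r₁₃⁆ + ⁅r₁₂, r₂₃⁆ + ⁅r₁₃, r₂₃⁆ = 0. -/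
open Matrix Kronecker

/-- `M₉` is the space of real matrices indexed by `Fin 3 × Fin 3`. -/
abbrev M₉ := Matrix (Fin 3 × Fin 3) (Fin 3 × Fin 3) ℝ

/-- `M₂₇` is the space of real matrices indexed by `Fin 3 × Fin 3 × Fin 3`. -/
abbrev M₂₇ := Matrix (Fin 3 × Fin 3 × Fin 3) (Fin 3 × Fin 3 × Fin 3) ℝ

/-- The parabolic classical `r`-matrix in the fundamental representation:
`r(η) = H23 ∧ E₁₃ + E₁₂ ∧ E₂₃ + η • (H13 ∧ E₃₂)`. -/
noncomputable def r (η : ℝ) : M₉ :=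
  H23 ⊗ₖ E 1 3 - E 1 3 ⊗ₖ H23 + E 1 2 ⊗ₖ E 2 3 - E 2 3 ⊗ₖ E 1 2 +
    η • (H13 ⊗ₖ E 3 2 - E 3 2 ⊗ₖ H13)

/-- `r(η)` placed in legs 1 and 2 of the triple tensor product. -/
noncomputable def r₁₂ (η : ℝ) : M₂₇ :=
  Matrix.reindex (Equiv.prodAssoc (Fin 3) (Fin 3) (Fin 3))
    (Equiv.prodAssoc (Fin 3) (Fin 3) (Fin 3)) (r η ⊗ₖ (1 : M₃))

/-- `r(η)` placed in legs 2 and 3 of the triple tensor product. -/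
noncomputable def r₂₃ (η : ℝ) : M₂₇ := (1 : M₃) ⊗ₖ r η

/-- `r(η)` placed in legs 1 and 3 of the triple tensor product. -/
noncomputable def r₁₃ (η : ℝ) : M₂₇ :=
  Matrix.of fun p q =>
    if p.2.1 = q.2.1 then r η (p.1, p.2.2) (q.1, q.2.2) else 0

/-- The integral matrix unit, indexed as `E`. -/
def intUnit (i j : ℕ) (a b : Fin 3) : ℤ := if a.val + 1 = i ∧ b.val + 1 = j then 1 else 0

/-- The entries of `3 • H13`. -/
def intH13 (a b : Fin 3) : ℤ := intUnit 1 1 a b - 2 * intUnit 2 2 a b + intUnit 3 3 a b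

/-- The entries of `3 • H23`. -/
def intH23 (a b : Fin 3) : ℤ := 2 * intUnit 1 1 a b - intUnit 2 2 a b - intUnit 3 3 a b

/-- The entries of three times the part of `r η` that is constant in `η`. -/
def intConst (i j a b : Fin 3) : ℤ :=
  intH23 i a * intUnit 1 3 j b - intUnit 1 3 i a * intH23 j b +
    3 * (intUnit 1 2 i a * intUnit 2 3 j b - intUnit 2 3 i a * intUnit 1 2 j b)

/-- The entries of three times the coefficient of `η` in `r η`. -/
def intLin (i j a b : Fin 3) : ℤ :=
  intH13 i a * intUnit 3 2 j b - intUnit 3 2 i a * intH13 j b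

/-- The entries of `⁅x₁₂, y₁₃⁆ + ⁅x₁₂, y₂₃⁆ + ⁅x₁₃, y₂₃⁆`, with `⁅x, y⁆` read as
`x * y - y * x` in which the left factor is always taken from `x`. -/
def cybeEntry {R : Type*} [CommRing R] (x y : Fin 3 → Fin 3 → Fin 3 → Fin 3 → R)
    (i j k a b c : Fin 3) : R :=
  ∑ m, (x i j m b * y m k a c - x i k m c * y m j a b +
    (x i j a m * y m k b c - x j k m c * y i m a b) +
    (x i k a m * y j m b c - x j k b m * y i m a c))

lemma E_apply (i j : ℕ) (a b : Fin 3) : E i j a b = (intUnit i j a b : ℝ) := by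
  simp [E, intUnit]

lemma r_apply (η : ℝ) (i j a b : Fin 3) :
    r η (i, j) (a, b) = (intConst i j a b + η * intLin i j a b) / 3 := by
  simp only [r, H13, H23, intConst, intLin, intH13, intH23, Matrix.add_apply, Matrix.sub_apply,
    Matrix.smul_apply, kroneckerMap_apply, E_apply, smul_eq_mul]
  push_cast
  ring

lemma commutators_apply (η : ℝ) (i j k a b c : Fin 3) :
    (⁅r₁₂ η, r₁₃ η⁆ + ⁅r₁₂ η, r₂₃ η⁆ + ⁅r₁₃ η, r₂₃ η⁆) (i, j, k) (a, b, c) =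
      cybeEntry (fun i j a b => r η (i, j) (a, b)) (fun i j a b => r η (i, j) (a, b))
        i j k a b c := by
  simp [cybeEntry, Ring.lie_def, Matrix.mul_apply, r₁₂, r₁₃, r₂₃, Fintype.sum_prod_type,
    Matrix.one_apply, Finset.sum_add_distrib, Finset.sum_sub_distrib]

lemma cybeEntry_intConst : ∀ i j k a b c, cybeEntry intConst intConst i j k a b c = 0 := by
  decide +kernel

lemma cybeEntry_intConst_intLin : ∀ i j k a b c,
    cybeEntry intConst intLin i j k a b c + cybeEntry intLin intConst i j k a b c = 0 := by
  decide +kernel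

lemma cybeEntry_intLin : ∀ i j k a b c, cybeEntry intLin intLin i j k a b c = 0 := by
  decide +kernel

/-- **Classical Yang–Baxter equation** for the parabolic classical `r`-matrix in the
fundamental representation: `⁅r₁₂, r₁₃⁆ + ⁅r₁₂, r₂₃⁆ + ⁅r₁₃, r₂₃⁆ = 0` for all `η`. -/
theorem parabolic_r_matrix_CYBE :
    ∀ η : ℝ, ⁅r₁₂ η, r₁₃ η⁆ + ⁅r₁₂ η, r₂₃ η⁆ + ⁅r₁₃ η, r₂₃ η⁆ = 0 := by
  intro η
  ext ⟨i, j, k⟩ ⟨a, b, c⟩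
  have hconst := congrArg (Int.cast : ℤ → ℝ) (cybeEntry_intConst i j k a b c)
  have hmixed := congrArg (Int.cast : ℤ → ℝ) (cybeEntry_intConst_intLin i j k a b c)
  have hlin := congrArg (Int.cast : ℤ → ℝ) (cybeEntry_intLin i j k a b c)
  rw [commutators_apply]
  simp only [cybeEntry, r_apply, Fin.sum_univ_three, Matrix.zero_apply] at hconst hmixed hlin ⊢
  push_cast at hconst hmixed hlin
  linear_combination (1 / 9) * hconst + (η / 9) * hmixed + (η ^ 2 / 9) * hlin
end
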